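/- Let H be a maximal subgroup of a finite group G, θ ∈ Irr(H), and χ an irreducible constituent of θ^G. Then cod(χ) = cod(θ) if and only if either (1) χ = θ^G and ker(χ) = ker(θ), or (2) χ|_H = θ and G = H·ker(χ). -/

import Mathlib

open CategoryTheory

/-- The kernel of (the character of) a finite-dimensional complex representation. -/
noncomputable def charKer {G : Type} [Group G] (V : FDRep ℂ G) : Subgroup G :=
  MonoidHom.ker (Representation.asGroupHom V.ρ)

/-- The codegree of a character: `|G : ker χ| / χ(1)`. -/
noncomputable def codeg {G : Type} [Group G] (V : FDRep ℂ G) : ℕ :=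
  (charKer V).index / Module.finrank ℂ V

/-- The set of codegrees of irreducible characters of `G`. -/
def codSet (G : Type) [Group G] : Set ℕ :=
  {n | ∃ V : FDRep ℂ G, Simple V ∧ codeg V = n}

/-- Inner product of class functions on a finite group. -/
noncomputable def innerChar (G : Type) [Group G] (f g : G → ℂ) : ℂ :=
  (∑ᶠ x : G, f x * starRingEnd ℂ (g x)) / Nat.card G

open scoped Classical in
/-- The induced character `θ^G` of a character `θ` of a subgroup `H ≤ G`. -/
noncomputable def indChar {G : Type} [Group G] (H : Subgroup G) (θ : FDRep ℂ ↥H) : G → ℂ :=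
  fun g => (∑ᶠ x : G, if h : x * g * x⁻¹ ∈ H then θ.character ⟨x * g * x⁻¹, h⟩ else 0) /
    Nat.card ↥H

/-!
The representation coinduced from `θ` has character `θ^G`. So `χ` embeds into it, and evaluation at
`1` turns the embedding into a map of `χ|_H` onto `θ`. Hence `χ(1) ≤ |G : H| θ(1)` and
`ker χ ∩ H ≤ ker θ`. As the degree of an irreducible character divides the index of its kernel,
`χ(1) cod(χ) = |G : ker χ|` holds exactly.

By maximality of `H` either `ker χ ≤ H` or `H ker χ = G`. In the first case
`χ(1) cod(χ) = |ker θ : ker χ| |G : H| θ(1) cod(θ)`, so equal codegrees force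
`χ(1) = |ker θ : ker χ| |G : H| θ(1)`, and both bounds are attained. In the second case `χ|_H` is
irreducible, hence equal to `θ`, and `H / (H ∩ ker χ) ≃ G / ker χ` gives equal codegrees.
-/

open Module Representation

section Irreducible

variable {k G H V : Type*} [Field k] [Monoid G] [Monoid H] [AddCommGroup V] [Module k V]

lemma isIrreducible_iff_nontrivial_and_toSubmodule_eq (ρ : Representation k G V) :
    ρ.IsIrreducible ↔
      Nontrivial V ∧ ∀ S : Subrepresentation ρ, S.toSubmodule = ⊥ ∨ S.toSubmodule = ⊤ := by
  have hbot : ∀ S : Subrepresentation ρ, S = ⊥ ↔ S.toSubmodule = ⊥ := fun _ =>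
    Subrepresentation.toSubmodule_injective.eq_iff.symm
  have htop : ∀ S : Subrepresentation ρ, S = ⊤ ↔ S.toSubmodule = ⊤ := fun _ =>
    Subrepresentation.toSubmodule_injective.eq_iff.symm
  have hnontrivial : Nontrivial (Subrepresentation ρ) ↔ Nontrivial V := by
    rw [← Submodule.nontrivial_iff k (M := V)]
    exact ⟨fun _ => (Subrepresentation.toSubmodule_injective (ρ := ρ)).nontrivial,
      fun _ => ⟨⊥, ⊤, fun h => bot_ne_top ((hbot ⊤).1 h.symm).symm⟩⟩
  rw [Representation.IsIrreducible, isSimpleOrder_iff, hnontrivial]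
  simp only [hbot, htop]

lemma nontrivial_of_isIrreducible (ρ : Representation k G V) [ρ.IsIrreducible] : Nontrivial V :=
  ((isIrreducible_iff_nontrivial_and_toSubmodule_eq ρ).1 inferInstance).1

lemma isIrreducible_of_range_subset {ρ : Representation k G V} [hρ : ρ.IsIrreducible]
    {σ : Representation k H V} (h : Set.range ρ ⊆ Set.range σ) : σ.IsIrreducible := by
  rw [isIrreducible_iff_nontrivial_and_toSubmodule_eq] at hρ ⊢
  refine ⟨hρ.1, fun S => hρ.2 ⟨S.toSubmodule, fun g v hv => ?_⟩⟩
  obtain ⟨x, hx⟩ := h ⟨g, rfl⟩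
  exact hx ▸ S.apply_mem_toSubmodule x hv

end Irreducible

section Simple

variable {k G : Type*} [Field k] [Monoid G]

/-- The inclusion of a subrepresentation, as a morphism of finite-dimensional representations. -/
noncomputable def subrepresentationInclusion {V : FDRep k G} (S : Subrepresentation V.ρ) :
    FDRep.of S.toRepresentation ⟶ V :=
  ⟨InducedCategory.homMk (ModuleCat.ofHom S.toSubmodule.subtype), fun _ => rfl⟩

instance {V : FDRep k G} (S : Subrepresentation V.ρ) : Mono (subrepresentationInclusion S) :=
  (forget (FDRep k G)).mono_of_mono_map ((mono_iff_injective _).2 Subtype.val_injective)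

lemma isIrreducible_of_simple (V : FDRep k G) [Simple V] : IsIrreducible V.ρ := by
  rw [isIrreducible_iff_nontrivial_and_toSubmodule_eq]
  refine ⟨?_, fun S => ?_⟩
  · by_contra hV
    rw [not_nontrivial_iff_subsingleton] at hV
    exact id_nonzero V (by ext x; exact Subsingleton.elim _ _)
  by_cases hS : subrepresentationInclusion S = 0
  · left
    refine (Submodule.eq_bot_iff _).2 fun v hv => ?_
    exact congrArg (fun i : FDRep.of S.toRepresentation ⟶ V => i.hom.hom.hom ⟨v, hv⟩) hS
  · right
    have := isIso_of_mono_of_nonzero hS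
    have hsurj : Function.Surjective ((forget (FDRep k G)).map (subrepresentationInclusion S)) :=
      (epi_iff_surjective _).1 inferInstance
    refine Submodule.eq_top_iff'.2 fun v => ?_
    obtain ⟨w, rfl⟩ := hsurj v
    exact w.2

end Simple

section FiniteOrder

variable {k V : Type*} [Field k] [AddCommGroup V] [Module k V]

lemma pow_eq_one_of_hasEigenvalue {f : End k V} {n : ℕ} (hf : f ^ n = 1) {μ : k}
    (hμ : f.HasEigenvalue μ) : μ ^ n = 1 := by
  obtain ⟨v, hv⟩ := hμ.exists_hasEigenvector
  have hpow : μ ^ n • v = (1 : k) • v := by rw [← hv.pow_apply, hf, End.one_apply, one_smul]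
  exact smul_left_injective k hv.2 hpow

variable [IsAlgClosed k] [FiniteDimensional k V]

lemma isInternal_eigenspace_of_pow_eq_one [DecidableEq k] {f : End k V} {n : ℕ}
    (hn : (n : k) ≠ 0) (hf : f ^ n = 1) : DirectSum.IsInternal f.eigenspace := by
  have hf_semisimple : f.IsSemisimple :=
    End.isSemisimple_of_squarefree_aeval_eq_zero (p := Polynomial.X ^ n - 1)
      (Polynomial.separable_X_pow_sub_C 1 hn one_ne_zero).squarefree (by simp [hf])
  exact DirectSum.isInternal_submodule_of_iSupIndep_of_iSup_eq_top
    (End.eigenspaces_iSupIndep f) hf_semisimple.iSup_eigenspace_eq_top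

lemma trace_pow_eq_sum_nthRootsFinset {f : End k V} {n : ℕ} (hn : (n : k) ≠ 0)
    (hf : f ^ n = 1) (m : ℕ) :
    LinearMap.trace k V (f ^ m) =
      ∑ μ ∈ Polynomial.nthRootsFinset n (1 : k), finrank k (f.eigenspace μ) * μ ^ m := by
  classical
  have hmaps : ∀ μ, Set.MapsTo (f ^ m) (f.eigenspace μ) (f.eigenspace μ) := fun μ =>
    End.mapsTo_genEigenspace_of_comm ((Commute.refl f).pow_right m) μ 1
  have hfin : Set.Finite {μ | f.eigenspace μ ≠ ⊥} :=
    WellFoundedGT.finite_ne_bot_of_iSupIndep (End.eigenspaces_iSupIndep f)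
  have hpos : 0 < n := Nat.pos_of_ne_zero fun h => hn (by simp [h])
  rw [LinearMap.trace_eq_sum_trace_restrict' (isInternal_eigenspace_of_pow_eq_one hn hf) hfin hmaps]
  refine (Finset.sum_congr rfl fun μ _ => ?_).trans
    (Finset.sum_subset (fun μ hμ => ?_) fun μ _ hμ => ?_)
  · have hsmul : (f ^ m).restrict (hmaps μ) = μ ^ m • LinearMap.id := by
      ext ⟨v, hv⟩
      rcases eq_or_ne v 0 with rfl | hv0
      · exact (map_zero (f ^ m)).trans (smul_zero _).symm
      · exact End.HasEigenvector.pow_apply ⟨hv, hv0⟩ m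
    rw [hsmul, map_smul, LinearMap.trace_id, smul_eq_mul, mul_comm]
  · exact (Polynomial.mem_nthRootsFinset hpos 1).2
      (pow_eq_one_of_hasEigenvalue hf (hfin.mem_toFinset.1 hμ))
  · have hbot : f.eigenspace μ = ⊥ := by simpa using hμ
    rw [hbot, finrank_bot, Nat.cast_zero, zero_mul]

end FiniteOrder

section Character

variable {G V : Type*} [Group G] [Finite G] [AddCommGroup V]

lemma isIntegral_character {k : Type*} [Field k] [IsAlgClosed k] [CharZero k] [Module k V]
    [FiniteDimensional k V] (ρ : Representation k G V) (g : G) :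
    IsIntegral ℤ (ρ.character g) := by
  have hg : ρ g ^ Nat.card G = 1 := by rw [← map_pow, pow_card_eq_one', map_one]
  rw [character, ← pow_one (ρ g),
    trace_pow_eq_sum_nthRootsFinset (Nat.cast_ne_zero.2 Nat.card_pos.ne') hg]
  refine IsIntegral.sum _ fun μ hμ => ?_
  have hμ_pow : μ ^ Nat.card G = 1 := (Polynomial.mem_nthRootsFinset Nat.card_pos 1).1 hμ
  have hμ_integral : IsIntegral ℤ μ := .of_pow Nat.card_pos (hμ_pow ▸ isIntegral_one)
  exact (isIntegral_natCast _).mul (hμ_integral.pow 1)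

lemma character_inv [Module ℂ V] [FiniteDimensional ℂ V] (ρ : Representation ℂ G V) (g : G) :
    ρ.character g⁻¹ = starRingEnd ℂ (ρ.character g) := by
  have hcard : Nat.card G ≠ 0 := Nat.card_pos.ne'
  have hg : ρ g ^ Nat.card G = 1 := by rw [← map_pow, pow_card_eq_one', map_one]
  have hginv : ρ g⁻¹ = ρ g ^ (Nat.card G - 1) := by
    rw [← map_pow, inv_eq_of_mul_eq_one_right]
    rw [mul_pow_sub_one hcard, pow_card_eq_one']
  rw [character, character, hginv, ← pow_one (ρ g), ← pow_mul,
    trace_pow_eq_sum_nthRootsFinset (Nat.cast_ne_zero.2 hcard) hg,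
    trace_pow_eq_sum_nthRootsFinset (Nat.cast_ne_zero.2 hcard) hg, map_sum]
  refine Finset.sum_congr rfl fun μ hμ => ?_
  have hμ' : μ ^ Nat.card G = 1 := (Polynomial.mem_nthRootsFinset Nat.card_pos 1).1 hμ
  have hμinv : μ ^ (Nat.card G - 1) = μ⁻¹ :=
    eq_inv_of_mul_eq_one_right (by rw [mul_pow_sub_one hcard, hμ'])
  simp [hμinv, Complex.inv_eq_conj (Complex.norm_eq_one_of_pow_eq_one hμ' hcard)]

end Character

section DegreeDvd

lemma isIntegral_sum_smul_apply {k G V : Type*} [CommRing k] [Monoid G] [Fintype G] [AddCommGroup V]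
    [Module k V] (ρ : Representation k G V) {a : G → k} (ha : ∀ g, IsIntegral ℤ (a g)) :
    IsIntegral ℤ (∑ g, a g • ρ g) := by
  let A := integralClosure ℤ k
  let x : MonoidAlgebra A G := ∑ g, .single g ⟨a g, ha g⟩
  have hx : MonoidAlgebra.lift A (End k V) G ρ x = ∑ g, a g • ρ g := by
    simp only [x, map_sum, MonoidAlgebra.lift_single]
    rfl
  have hx_integral : IsIntegral A x := Algebra.IsIntegral.isIntegral x
  exact isIntegral_trans _ (hx ▸ hx_integral.map (MonoidAlgebra.lift A (End k V) G ρ))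

lemma natCast_dvd_of_isIntegral_div {k : Type*} [Field k] [CharZero k] {a b : ℕ} (hb : b ≠ 0)
    (h : IsIntegral ℤ (a / b : k)) : b ∣ a := by
  have hrat : IsIntegral ℤ (a / b : ℚ) := by
    rw [← isIntegral_algebraMap_iff (FaithfulSMul.algebraMap_injective ℚ k)]
    simpa using h
  obtain ⟨c, hc⟩ := IsIntegrallyClosed.isIntegral_iff.1 hrat
  rw [eq_div_iff (Nat.cast_ne_zero.2 hb), eq_intCast] at hc
  exact Int.natCast_dvd_natCast.1 ⟨c, by rw [mul_comm]; exact_mod_cast hc.symm⟩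

variable {k G V : Type*} [Field k] [Group G] [AddCommGroup V] [Module k V]

lemma sum_character_inv_smul_mul_comm [Fintype G] (ρ : Representation k G V) (h : G) :
    (∑ g, ρ.character g⁻¹ • ρ g) * ρ h = ρ h * ∑ g, ρ.character g⁻¹ • ρ g := by
  rw [Finset.sum_mul, Finset.mul_sum]
  refine Fintype.sum_equiv (MulAut.conj h⁻¹).toEquiv _ _ fun g => ?_
  have hconj : ρ.character (h⁻¹ * (g * h))⁻¹ = ρ.character g⁻¹ := by
    simpa [mul_assoc] using char_conj ρ g⁻¹ h⁻¹
  simp only [MulEquiv.toEquiv_eq_coe, EquivLike.coe_coe, MulAut.conj_apply, inv_inv, hconj,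
    smul_mul_assoc, mul_smul_comm, ← map_mul, mul_assoc, mul_inv_cancel_left]

variable [IsAlgClosed k] [FiniteDimensional k V]

lemma finrank_smul_sum_character_inv_smul [Fintype G] (ρ : Representation k G V) [ρ.IsIrreducible]
    (hG : (Nat.card G : k) ≠ 0) :
    (finrank k V : k) • ∑ g, ρ.character g⁻¹ • ρ g = (Nat.card G : k) • 1 := by
  have := invertibleOfNonzero hG
  let T : ρ.IntertwiningMap ρ := ⟨∑ g, ρ.character g⁻¹ • ρ g, sum_character_inv_smul_mul_comm ρ⟩
  obtain ⟨c, hc⟩ := (IsIrreducible.algebraMap_intertwiningMap_bijective_of_isAlgClosed (ρ := ρ)).2 T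
  have hscalar : ∑ g, ρ.character g⁻¹ • ρ g = c • 1 :=
    (congrArg IntertwiningMap.toLinearMap hc).symm
  have hnorm : ∑ g, ρ.character g * ρ.character g⁻¹ = Nat.card G := by
    have h := card_inv_mul_sum_char_mul_char_eq_finrank ρ ρ
    rwa [IsIrreducible.finrank_intertwiningMap_self, Nat.cast_one, inv_mul_eq_one₀ hG, eq_comm] at h
  have htrace : c * finrank k V = Nat.card G := by
    have h := congrArg (LinearMap.trace k V) hscalar
    simp only [map_sum, map_smul, LinearMap.trace_one, smul_eq_mul] at h
    rw [← h, ← hnorm]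
    exact Finset.sum_congr rfl fun g _ => mul_comm _ _
  rw [hscalar, smul_smul, mul_comm, htrace]

variable [CharZero k] [Finite G]

lemma finrank_dvd_card (ρ : Representation k G V) [ρ.IsIrreducible] : finrank k V ∣ Nat.card G := by
  have := Fintype.ofFinite G
  have := nontrivial_of_isIrreducible ρ
  have hdeg : (finrank k V : k) ≠ 0 := Nat.cast_ne_zero.2 finrank_pos.ne'
  have hsum : ∑ g, ρ.character g⁻¹ • ρ g =
      algebraMap k (End k V) (Nat.card G / finrank k V) := by
    rw [Algebra.algebraMap_eq_smul_one, div_eq_inv_mul, ← smul_smul,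
      ← finrank_smul_sum_character_inv_smul ρ (Nat.cast_ne_zero.2 Nat.card_pos.ne'),
      inv_smul_smul₀ hdeg]
  have hintegral := isIntegral_sum_smul_apply ρ fun g => isIntegral_character ρ g⁻¹
  rw [hsum, isIntegral_algebraMap_iff (FaithfulSMul.algebraMap_injective k (End k V))] at hintegral
  exact natCast_dvd_of_isIntegral_div finrank_pos.ne' hintegral

lemma finrank_dvd_index_ker (ρ : Representation k G V) [ρ.IsIrreducible] :
    finrank k V ∣ (MonoidHom.ker ρ).index := by
  have : IsTrivial (ρ.comp (MonoidHom.ker ρ).subtype) := ⟨fun g => g.2⟩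
  have : (ρ.ofQuotient (MonoidHom.ker ρ)).IsIrreducible :=
    isIrreducible_of_range_subset (ρ := ρ) (Set.range_subset_iff.2 fun g => ⟨g, rfl⟩)
  exact Subgroup.index_eq_card (MonoidHom.ker ρ) ▸
    finrank_dvd_card (ρ.ofQuotient (MonoidHom.ker ρ))

end DegreeDvd

section Coinduced

lemma trace_pi_eq_sum_trace {k ι W : Type*} [CommRing k] [Fintype ι] [DecidableEq ι]
    [AddCommGroup W] [Module k W] [Module.Free k W] [Module.Finite k W] (f : End k (ι → W)) :
    LinearMap.trace k (ι → W) f =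
      ∑ i, LinearMap.trace k W (LinearMap.proj i ∘ₗ f ∘ₗ LinearMap.single k (fun _ => W) i) := by
  have hf : f = ∑ i, (f ∘ₗ LinearMap.single k (fun _ => W) i) ∘ₗ LinearMap.proj i := by
    refine LinearMap.pi_ext fun i w => ?_
    simp [LinearMap.sum_apply, Pi.single_apply, apply_ite]
  conv_lhs => rw [hf, map_sum]
  exact Finset.sum_congr rfl fun i _ => LinearMap.trace_comp_comm' _ _

variable {k G W : Type*} [Field k] [Group G] {H : Subgroup G} [AddCommGroup W] [Module k W]

/-- Averaging over `H`, as a map from all functions `G → W` to the space of the coinduced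
representation. It is the identity on that space when `|H|` is nonzero in `k`. -/
noncomputable def averageCoindV [Fintype H] (σ : Representation k H W) :
    (G → W) →ₗ[k] coindV H.subtype σ where
  toFun F := ⟨fun x => (Nat.card H : k)⁻¹ • ∑ h : H, σ h (F ((h : G)⁻¹ * x)), fun h₀ x => by
    simp only [map_smul, map_sum]
    congr 1
    refine Fintype.sum_equiv (Equiv.mulLeft h₀⁻¹) _ _ fun h => ?_
    simp [mul_assoc, ← Module.End.mul_apply, ← map_mul]⟩
  map_add' F₁ F₂ := by
    ext x
    simp [Finset.sum_add_distrib]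
  map_smul' c F := by
    ext x
    simp [← Finset.smul_sum, smul_comm c]

lemma averageCoindV_comp_subtype [Fintype H] (σ : Representation k H W)
    (hH : (Nat.card H : k) ≠ 0) :
    averageCoindV σ ∘ₗ (coindV H.subtype σ).subtype = LinearMap.id := by
  ext F x
  have hF : ∀ h : H, σ h (F.1 ((h : G)⁻¹ * x)) = F.1 x := fun h => by
    simpa using (F.2 h ((h : G)⁻¹ * x)).symm
  change (Nat.card H : k)⁻¹ • ∑ h : H, σ h (F.1 ((h : G)⁻¹ * x)) = F.1 x
  rw [Finset.sum_congr rfl fun h _ => hF h, Finset.sum_const, Finset.card_univ,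
    ← Nat.card_eq_fintype_card, ← Nat.cast_smul_eq_nsmul k, inv_smul_smul₀ hH]

open scoped Classical in
lemma proj_coind_averageCoindV_single [Fintype H] (σ : Representation k H W) (g x : G) :
    LinearMap.proj x ∘ₗ ((coindV H.subtype σ).subtype ∘ₗ coind H.subtype σ g ∘ₗ averageCoindV σ) ∘ₗ
        LinearMap.single k (fun _ => W) x =
      (Nat.card H : k)⁻¹ • if hx : x * g * x⁻¹ ∈ H then σ ⟨x * g * x⁻¹, hx⟩ else 0 := by
  ext w
  change (Nat.card H : k)⁻¹ • ∑ h : H, σ h ((Pi.single x w : G → W) ((h : G)⁻¹ * (x * g))) = _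
  have hsupport : ∀ h : H, (h : G)⁻¹ * (x * g) = x ↔ (h : G) = x * g * x⁻¹ := fun h => by
    rw [inv_mul_eq_iff_eq_mul, eq_mul_inv_iff_mul_eq, eq_comm]
  rw [LinearMap.smul_apply]
  congr 1
  split_ifs with hx
  · rw [Fintype.sum_eq_single ⟨x * g * x⁻¹, hx⟩ fun h hne => ?_]
    · rw [(hsupport _).2 rfl, Pi.single_eq_same]
    · rw [Pi.single_eq_of_ne fun h_eq => hne (Subtype.ext ((hsupport h).1 h_eq)), map_zero]
  · refine Finset.sum_eq_zero fun h _ => ?_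
    rw [Pi.single_eq_of_ne fun h_eq => hx ((hsupport h).1 h_eq ▸ h.2), map_zero]

variable [FiniteDimensional k W]

open scoped Classical in
lemma character_coind [Fintype G] (σ : Representation k H W) (hH : (Nat.card H : k) ≠ 0) (g : G) :
    (coind H.subtype σ).character g = (∑ x : G, if hx : x * g * x⁻¹ ∈ H then
      σ.character ⟨x * g * x⁻¹, hx⟩ else 0) / Nat.card H := by
  -- Extending `coind g` by the averaging projection to all functions `G → W` keeps the trace,
  -- which is then read off the diagonal blocks.
  let ι := (coindV H.subtype σ).subtype
  calc (coind H.subtype σ).character g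
    _ = LinearMap.trace k _ ((coind H.subtype σ g ∘ₗ averageCoindV σ) ∘ₗ ι) := by
      rw [LinearMap.comp_assoc, averageCoindV_comp_subtype σ hH, LinearMap.comp_id, character]
    _ = LinearMap.trace k (G → W) (ι ∘ₗ coind H.subtype σ g ∘ₗ averageCoindV σ) :=
      LinearMap.trace_comp_comm' _ _
    _ = _ := by
      simp only [trace_pi_eq_sum_trace, ι, proj_coind_averageCoindV_single, map_smul, smul_eq_mul,
        inv_mul_eq_div, ← Finset.sum_div, apply_dite (LinearMap.trace k W), map_zero, character]

lemma finrank_coind [CharZero k] [Finite G] (σ : Representation k H W) :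
    finrank k (coindV H.subtype σ) = H.index * finrank k W := by
  have := Fintype.ofFinite G
  have hH : (Nat.card H : k) ≠ 0 := Nat.cast_ne_zero.2 Nat.card_pos.ne'
  have h := character_coind σ hH 1
  have h1 : ∀ hx : (1 : G) ∈ H, (⟨1, hx⟩ : H) = 1 := fun _ => rfl
  simp only [char_one, mul_one, mul_inv_cancel, one_mem, dite_true, h1, Finset.sum_const,
    Finset.card_univ, ← Nat.card_eq_fintype_card, nsmul_eq_mul, ← H.card_mul_index] at h
  rw [Nat.cast_mul, mul_assoc, mul_div_cancel_left₀ _ hH] at h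
  exact_mod_cast h

end Coinduced

section Frobenius

section Adjoint

variable {k G H V W : Type*} [Semiring k] [Monoid G] [Monoid H] [AddCommMonoid V] [Module k V]
  [AddCommMonoid W] [Module k W] {φ : H →* G} {ρ : Representation k G V} {σ : Representation k H W}

lemma intertwiningMap_coind_apply (f : ρ.IntertwiningMap (coind φ σ)) (x y : G) (v : V) :
    (f (ρ x v)).1 y = (f v).1 (y * x) :=
  congr(($(LinearMap.congr_fun (f.isIntertwining' x) v)).1 y)

/-- One direction of Frobenius reciprocity: an intertwining map into a coinduced representation,
followed by evaluation at `1`, intertwines the restriction along `φ` with `σ`. -/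
def frobeniusAdjoint (f : ρ.IntertwiningMap (coind φ σ)) :
    IntertwiningMap (ρ.comp φ : Representation k H V) σ where
  toLinearMap := LinearMap.proj 1 ∘ₗ (coindV φ σ).subtype ∘ₗ f.toLinearMap
  isIntertwining' h := by
    ext v
    change (f (ρ (φ h) v)).1 1 = σ h ((f v).1 1)
    rw [intertwiningMap_coind_apply, one_mul, ← (f v).2 h 1, mul_one]

lemma frobeniusAdjoint_ne_zero {f : ρ.IntertwiningMap (coind φ σ)} (hf : f ≠ 0) :
    frobeniusAdjoint f ≠ 0 := by
  contrapose! hf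
  ext v x
  calc (f v).1 x
    _ = (f (ρ x v)).1 1 := by rw [intertwiningMap_coind_apply, one_mul]
    _ = 0 := congr($hf (ρ x v))

end Adjoint

section Kernel

variable {k G V W : Type*} [Semiring k] [Group G] [AddCommMonoid V] [Module k V] [AddCommMonoid W]
  [Module k W] {ρ : Representation k G V} {σ : Representation k G W}

lemma ker_le_ker_of_surjective {f : ρ.IntertwiningMap σ} (hf : Function.Surjective f) :
    MonoidHom.ker ρ ≤ MonoidHom.ker σ := fun g hg => by
  rw [MonoidHom.mem_ker] at hg ⊢
  ext w
  obtain ⟨v, rfl⟩ := hf w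
  rw [← f.isIntertwining, hg, End.one_apply, End.one_apply]

lemma ker_le_ker_of_injective {f : ρ.IntertwiningMap σ} (hf : Function.Injective f) :
    MonoidHom.ker σ ≤ MonoidHom.ker ρ := fun g hg => by
  rw [MonoidHom.mem_ker] at hg ⊢
  ext v
  apply hf
  rw [f.isIntertwining, hg, End.one_apply, End.one_apply]

end Kernel

variable {k G V W : Type*} [Field k] [Group G] {H : Subgroup G} [AddCommGroup V] [Module k V]
  [AddCommGroup W] [Module k W] {ρ : Representation k G V} {σ : Representation k H W}

lemma ker_subgroupOf_le_ker [σ.IsIrreducible] {f : ρ.IntertwiningMap (coind H.subtype σ)}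
    (hf : f ≠ 0) : (MonoidHom.ker ρ).subgroupOf H ≤ MonoidHom.ker σ :=
  ker_le_ker_of_surjective
    ((IsIrreducible.surjective_or_eq_zero _).resolve_right (frobeniusAdjoint_ne_zero hf))

variable [CharZero k] [Finite G] [FiniteDimensional k W] [ρ.IsIrreducible]

lemma finrank_le_index_mul_finrank {f : ρ.IntertwiningMap (coind H.subtype σ)} (hf : f ≠ 0) :
    finrank k V ≤ H.index * finrank k W := by
  rw [← finrank_coind σ]
  exact LinearMap.finrank_le_finrank_of_injective (f := f.toLinearMap)
    ((IsIrreducible.injective_or_eq_zero f).resolve_right hf)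

variable [FiniteDimensional k V]

lemma character_eq_character_coind_iff {f : ρ.IntertwiningMap (coind H.subtype σ)} (hf : f ≠ 0) :
    ρ.character = (coind H.subtype σ).character ↔ finrank k V = H.index * finrank k W := by
  rw [← finrank_coind σ]
  refine ⟨fun h => ?_, fun h => ?_⟩
  · exact_mod_cast (char_one ρ).symm.trans ((congrFun h 1).trans (char_one _))
  · have hinj := (IsIrreducible.injective_or_eq_zero f).resolve_right hf
    have hsurj := (LinearMap.injective_iff_surjective_of_finrank_eq_finrank h).1 hinj
    exact char_iso (f.ofBijective ⟨hinj, hsurj⟩)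

end Frobenius

section Subgroup

variable {G : Type*} [Group G] {H : Subgroup G}

lemma sup_eq_top_iff_forall_eq_mul {N : Subgroup G} [N.Normal] :
    H ⊔ N = ⊤ ↔ ∀ g : G, ∃ h k : G, h ∈ H ∧ k ∈ N ∧ g = h * k := by
  simp only [eq_top_iff, SetLike.le_def, Subgroup.mem_top, true_imp_iff,
    Subgroup.mem_sup_of_normal_right, exists_and_left, eq_comm]

lemma index_eq_relIndex_mul_index_mul_index {K : Subgroup G} {L : Subgroup H} (hK : K ≤ H)
    (hL : K.subgroupOf H ≤ L) : K.index = (K.subgroupOf H).relIndex L * L.index * H.index := by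
  rw [Subgroup.relIndex_mul_index hL, ← Subgroup.relIndex, Subgroup.relIndex_mul_index hK]

lemma index_subgroupOf_eq_index {N : Subgroup G} [N.Normal] (h : H ⊔ N = ⊤) :
    (N.subgroupOf H).index = N.index := by
  rw [← Subgroup.relIndex, ← Subgroup.relIndex_sup_right, h, Subgroup.relIndex_top_right]

end Subgroup

section Codegree

variable {G : Type} [Group G]

lemma charKer_eq_ker (V : FDRep ℂ G) : charKer V = MonoidHom.ker V.ρ := by
  ext g
  simp [charKer, MonoidHom.mem_ker, Units.ext_iff, Representation.asGroupHom_apply]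

instance (V : FDRep ℂ G) : (charKer V).Normal := MonoidHom.normal_ker _

lemma finrank_pos_of_simple (V : FDRep ℂ G) [Simple V] : 0 < finrank ℂ V := by
  have := isIrreducible_of_simple V
  have : Nontrivial V := nontrivial_of_isIrreducible V.ρ
  exact finrank_pos

variable [Finite G]

lemma finrank_mul_codeg (V : FDRep ℂ G) [Simple V] :
    finrank ℂ V * codeg V = (charKer V).index := by
  have := isIrreducible_of_simple V
  exact Nat.mul_div_cancel' (charKer_eq_ker V ▸ finrank_dvd_index_ker V.ρ)

lemma codeg_pos (V : FDRep ℂ G) [Simple V] : 0 < codeg V :=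
  Nat.pos_of_ne_zero fun h =>
    (charKer V).index_ne_zero_of_finite (by rw [← finrank_mul_codeg V, h, mul_zero])

variable {H : Subgroup G} {θ : FDRep ℂ H} {χ : FDRep ℂ G}

lemma indChar_eq_character_coind (θ : FDRep ℂ H) :
    indChar H θ = character (coind H.subtype θ.ρ) := by
  classical
  have := Fintype.ofFinite G
  ext g
  rw [character_coind _ (Nat.cast_ne_zero.2 Nat.card_pos.ne'), indChar, finsum_eq_sum_of_fintype]
  rfl

lemma innerChar_indChar (θ : FDRep ℂ H) (χ : FDRep ℂ G) : innerChar G (indChar H θ) χ.character =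
    finrank ℂ (IntertwiningMap χ.ρ (coind H.subtype θ.ρ)) := by
  have := Fintype.ofFinite G
  have : Invertible (Nat.card G : ℂ) := invertibleOfNonzero (Nat.cast_ne_zero.2 Nat.card_pos.ne')
  rw [← card_inv_mul_sum_char_mul_char_eq_finrank, innerChar, finsum_eq_sum_of_fintype,
    indChar_eq_character_coind, div_eq_inv_mul]
  simp only [character_inv]
  rfl

lemma exists_intertwiningMap_ne_zero (h : innerChar G (indChar H θ) χ.character ≠ 0) :
    ∃ f : IntertwiningMap χ.ρ (coind H.subtype θ.ρ), f ≠ 0 := by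
  rw [innerChar_indChar, Nat.cast_ne_zero] at h
  contrapose! h
  have : Subsingleton (IntertwiningMap χ.ρ (coind H.subtype θ.ρ)) :=
    ⟨fun f₁ f₂ => (h f₁).trans (h f₂).symm⟩
  exact finrank_zero_of_subsingleton

lemma character_eq_indChar_iff [Simple χ] (h : innerChar G (indChar H θ) χ.character ≠ 0) :
    χ.character = indChar H θ ↔ finrank ℂ χ = H.index * finrank ℂ θ := by
  have := isIrreducible_of_simple χ
  obtain ⟨f, hf⟩ := exists_intertwiningMap_ne_zero h
  rw [indChar_eq_character_coind]
  exact character_eq_character_coind_iff hf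

lemma finrank_le_of_innerChar_ne_zero [Simple χ]
    (h : innerChar G (indChar H θ) χ.character ≠ 0) :
    finrank ℂ χ ≤ H.index * finrank ℂ θ := by
  have := isIrreducible_of_simple χ
  obtain ⟨f, hf⟩ := exists_intertwiningMap_ne_zero h
  exact finrank_le_index_mul_finrank hf

variable [Simple θ]

lemma charKer_subgroupOf_le (h : innerChar G (indChar H θ) χ.character ≠ 0) :
    (charKer χ).subgroupOf H ≤ charKer θ := by
  have := isIrreducible_of_simple θ
  obtain ⟨f, hf⟩ := exists_intertwiningMap_ne_zero h
  rw [charKer_eq_ker, charKer_eq_ker]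
  exact ker_subgroupOf_le_ker hf

lemma charKer_eq_map_iff_relIndex_eq_one (h : innerChar G (indChar H θ) χ.character ≠ 0)
    (hker : charKer χ ≤ H) :
    charKer χ = (charKer θ).map H.subtype ↔
      ((charKer χ).subgroupOf H).relIndex (charKer θ) = 1 := by
  rw [Subgroup.relIndex_eq_one, ← Subgroup.map_subtype_le_map_subtype,
    Subgroup.map_subgroupOf_eq_of_le hker]
  refine ⟨fun h => h.ge, fun hle => hle.antisymm' ?_⟩
  rw [← Subgroup.map_subgroupOf_eq_of_le hker, Subgroup.map_subtype_le_map_subtype]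
  exact charKer_subgroupOf_le h

variable [Simple χ]

lemma finrank_mul_codeg_eq_of_charKer_le (h : innerChar G (indChar H θ) χ.character ≠ 0)
    (hker : charKer χ ≤ H) :
    finrank ℂ χ * codeg χ =
      ((charKer χ).subgroupOf H).relIndex (charKer θ) * (H.index * finrank ℂ θ) * codeg θ := by
  rw [finrank_mul_codeg, index_eq_relIndex_mul_index_mul_index hker (charKer_subgroupOf_le h),
    ← finrank_mul_codeg]
  ring

lemma codeg_eq_iff_of_charKer_le (h : innerChar G (indChar H θ) χ.character ≠ 0)
    (hker : charKer χ ≤ H) : codeg χ = codeg θ ↔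
      finrank ℂ χ = H.index * finrank ℂ θ ∧ charKer χ = (charKer θ).map H.subtype := by
  have hcodeg := finrank_mul_codeg_eq_of_charKer_le h hker
  rw [charKer_eq_map_iff_relIndex_eq_one h hker]
  generalize ((charKer χ).subgroupOf H).relIndex (charKer θ) = m at hcodeg ⊢
  have hχ_pos := finrank_pos_of_simple χ
  constructor
  · intro heq
    have hdegree : finrank ℂ χ = m * (H.index * finrank ℂ θ) :=
      Nat.eq_of_mul_eq_mul_right (codeg_pos θ) (heq ▸ hcodeg)
    have hm : m = 1 := by
      have hbound := finrank_le_of_innerChar_ne_zero h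
      nlinarith
    exact ⟨by rw [hdegree, hm, one_mul], hm⟩
  · rintro ⟨hdegree, rfl⟩
    rw [one_mul, ← hdegree] at hcodeg
    exact Nat.eq_of_mul_eq_mul_left hχ_pos hcodeg

lemma exists_bijective_intertwiningMap_of_sup_charKer_eq_top
    (h : innerChar G (indChar H θ) χ.character ≠ 0) (hsup : H ⊔ charKer χ = ⊤) :
    ∃ f : IntertwiningMap (χ.ρ.comp H.subtype : Representation ℂ H χ) θ.ρ,
      Function.Bijective f := by
  have := isIrreducible_of_simple χ
  have := isIrreducible_of_simple θ
  obtain ⟨f, hf⟩ := exists_intertwiningMap_ne_zero h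
  have : Representation.IsIrreducible (χ.ρ.comp H.subtype : Representation ℂ H χ) := by
    refine isIrreducible_of_range_subset (ρ := χ.ρ) (Set.range_subset_iff.2 fun g => ?_)
    obtain ⟨h, k, hh, hk, rfl⟩ := sup_eq_top_iff_forall_eq_mul.1 hsup g
    rw [charKer_eq_ker, MonoidHom.mem_ker] at hk
    exact ⟨⟨h, hh⟩, by simp [hk]⟩
  exact ⟨_, (IsIrreducible.bijective_or_eq_zero _).resolve_right (frobeniusAdjoint_ne_zero hf)⟩

lemma character_eq_of_sup_charKer_eq_top (h : innerChar G (indChar H θ) χ.character ≠ 0)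
    (hsup : H ⊔ charKer χ = ⊤) (x : H) : χ.character x = θ.character x := by
  obtain ⟨f, hf⟩ := exists_bijective_intertwiningMap_of_sup_charKer_eq_top h hsup
  exact congrFun (char_iso (f.ofBijective hf)) x

lemma codeg_eq_of_sup_charKer_eq_top (h : innerChar G (indChar H θ) χ.character ≠ 0)
    (hsup : H ⊔ charKer χ = ⊤) : codeg χ = codeg θ := by
  obtain ⟨f, hf⟩ := exists_bijective_intertwiningMap_of_sup_charKer_eq_top h hsup
  have hker : (charKer χ).subgroupOf H = charKer θ := by
    rw [charKer_eq_ker, charKer_eq_ker]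
    exact (ker_le_ker_of_surjective hf.2).antisymm (ker_le_ker_of_injective hf.1)
  have hdegree : finrank ℂ χ = finrank ℂ θ := (LinearEquiv.ofBijective f.toLinearMap hf).finrank_eq
  rw [codeg, codeg, hdegree, ← hker, index_subgroupOf_eq_index hsup]

end Codegree

theorem stmt_4 {G : Type} [Group G] [Finite G] (H : Subgroup G) (hmax : IsCoatom H)
    (θ : FDRep ℂ ↥H) (hθ : Simple θ) (χ : FDRep ℂ G) (hχ : Simple χ)
    (hcons : innerChar G (indChar H θ) χ.character ≠ 0) :
    codeg χ = codeg θ ↔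
      (χ.character = indChar H θ ∧ charKer χ = (charKer θ).map H.subtype) ∨
      ((∀ x : ↥H, χ.character ↑x = θ.character x) ∧
        ∀ g : G, ∃ h k : G, h ∈ H ∧ k ∈ charKer χ ∧ g = h * k) := by
  rw [← sup_eq_top_iff_forall_eq_mul]
  by_cases hker : charKer χ ≤ H
  · have hsup : H ⊔ charKer χ ≠ ⊤ := (sup_eq_left.2 hker).trans_ne hmax.1
    rw [character_eq_indChar_iff hcons, codeg_eq_iff_of_charKer_le hcons hker,
      or_iff_left fun h => hsup h.2]
  · have hsup : H ⊔ charKer χ = ⊤ := (hmax.not_le_iff_codisjoint.1 hker).eq_top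
    exact iff_of_true (codeg_eq_of_sup_charKer_eq_top hcons hsup)
      (Or.inr ⟨character_eq_of_sup_charKer_eq_top hcons hsup, hsup⟩)
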